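/- arXiv:2511.07631 — 3 statements merged into one kernel-verified Lean document; each statement's English description precedes it below -/
import Mathlib

section
/- Let X be a simplicial surface. Then the following are equivalent: (a) Aut(X) acts transitively on the edges X_1, has exactly one orbit on the faces X_2, and the stabiliser in Aut(X) of every edge has order 4; (b) Aut(X) acts transitively on the faces X_2, has exactly one orbit on the vertices X_0, and the stabiliser in Aut(X) of every face has order 6. -/
open Finset

/-- A (connected) simplicial surface: a finite, downward-closed family of nonempty subsets of
the vertex set `α`, pure of dimension 2, such that every edge lies in exactly two faces,
the faces around each vertex form an umbrella, and the surface is connected. -/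
structure SimplicialSurface (α : Type*) [Fintype α] [DecidableEq α] where
  cplx : Finset (Finset α)
  nonempty_of_mem : ∀ s ∈ cplx, s.Nonempty
  down_closed : ∀ s ∈ cplx, ∀ t : Finset α, t.Nonempty → t ⊆ s → t ∈ cplx
  card_le_three : ∀ s ∈ cplx, s.card ≤ 3
  pure_two : ∀ s ∈ cplx, ∃ F ∈ cplx, s ⊆ F ∧ F.card = 3
  dim_two : ∃ F ∈ cplx, F.card = 3
  all_vertices : ∀ x : α, {x} ∈ cplx
  edge_in_two_faces : ∀ e ∈ cplx, e.card = 2 →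
    (cplx.filter (fun F => e ⊆ F ∧ F.card = 3)).card = 2
  umbrella_exists : ∀ v : α, ∃ n : ℕ, 0 < n ∧ ∃ u : Fin n → Finset α,
    Function.Injective u ∧
    (∀ i, u i ∈ cplx ∧ (u i).card = 3 ∧ v ∈ u i) ∧
    (∀ F ∈ cplx, F.card = 3 → v ∈ F → ∃ i, u i = F) ∧
    (∀ i : Fin n, (u i ∩ u (finRotate n i)).card = 2)
  connected : ∀ F ∈ cplx, ∀ G ∈ cplx, F.card = 3 → G.card = 3 →
    Relation.ReflTransGen (fun A B => A ∈ cplx ∧ B ∈ cplx ∧ (A ∩ B).card = 2) F G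

lemma Equiv.Perm.finset_image_mul {α : Type*} [DecidableEq α] (π σ : Equiv.Perm α)
    (s : Finset α) :
    Finset.image ⇑(π * σ) s = Finset.image ⇑π (Finset.image ⇑σ s) := by
  rw [Finset.image_image]
  rfl

namespace SimplicialSurface

variable {α : Type*} [Fintype α] [DecidableEq α] (X : SimplicialSurface α)

/-- The set `X_2` of faces of `X`, i.e. the 3-element members. -/
def faces : Finset (Finset α) := X.cplx.filter fun s => s.card = 3

/-- The set `X_1` of edges of `X`, i.e. the 2-element members. -/
def edges : Finset (Finset α) := X.cplx.filter fun s => s.card = 2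

/-- The automorphism group of `X`: permutations of the vertices mapping members of the
complex to members of the complex. -/
def aut : Subgroup (Equiv.Perm α) where
  carrier := { π | ∀ s : Finset α, s ∈ X.cplx ↔ Finset.image ⇑π s ∈ X.cplx }
  one_mem' := by intro s; simp
  mul_mem' := by
    intro π σ hπ hσ s
    rw [Equiv.Perm.finset_image_mul, ← hπ (Finset.image ⇑σ s), ← hσ s]
  inv_mem' := by
    intro π hπ s
    have h2 : Finset.image ⇑π (Finset.image ⇑π⁻¹ s) = s := by ext x; simp
    have h := hπ (Finset.image ⇑π⁻¹ s)
    rw [h2] at h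
    exact h.symm

/-- The setwise stabiliser in `Aut(X)` of a set `s` of vertices. -/
def stab (s : Finset α) : Subgroup (Equiv.Perm α) where
  carrier := { π | π ∈ X.aut ∧ Finset.image ⇑π s = s }
  one_mem' := ⟨X.aut.one_mem, by simp⟩
  mul_mem' := by
    rintro π σ ⟨hπ, hπs⟩ ⟨hσ, hσs⟩
    exact ⟨X.aut.mul_mem hπ hσ, by rw [Equiv.Perm.finset_image_mul, hσs, hπs]⟩
  inv_mem' := by
    rintro π ⟨hπ, hπs⟩
    refine ⟨X.aut.inv_mem hπ, ?_⟩
    calc Finset.image ⇑π⁻¹ s = Finset.image ⇑π⁻¹ (Finset.image ⇑π s) := by rw [hπs]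
      _ = s := by ext x; simp

/-- `X` is edge-transitive if `Aut(X)` acts transitively on the edges `X_1`. -/
def EdgeTransitive : Prop :=
  ∀ e₁ ∈ X.edges, ∀ e₂ ∈ X.edges, ∃ π ∈ X.aut, Finset.image ⇑π e₁ = e₂

/-- The orbit of a set of vertices under `Aut(X)`. -/
def orbit (s : Finset α) : Set (Finset α) := { t | ∃ π ∈ X.aut, Finset.image ⇑π s = t }

/-- The set of `Aut(X)`-orbits on the faces of `X`. -/
def faceOrbits : Set (Set (Finset α)) := { O | ∃ F ∈ X.faces, O = X.orbit F }

/-- The set of `Aut(X)`-orbits on the vertices of `X`. -/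
def vertexOrbits : Set (Set α) := { O | ∃ v : α, O = { w | ∃ π ∈ X.aut, π v = w } }

/-- The degree of a vertex: the number of faces containing it. -/
def degree (v : α) : ℕ := (X.faces.filter fun F => v ∈ F).card

end SimplicialSurface

namespace SimplicialSurface

section Aux

variable {α : Type*} [Fintype α] [DecidableEq α] (X : SimplicialSurface α)

lemma mem_faces' {F : Finset α} : F ∈ X.faces ↔ F ∈ X.cplx ∧ F.card = 3 := by
  simp [faces]

lemma mem_edges' {F : Finset α} : F ∈ X.edges ↔ F ∈ X.cplx ∧ F.card = 2 := by
  simp [edges]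

lemma aut_image_faces {π : Equiv.Perm α} (h : π ∈ X.aut) {F : Finset α} (hF : F ∈ X.faces) :
    Finset.image ⇑π F ∈ X.faces := by
  rw [mem_faces'] at *
  exact ⟨(h F).1 hF.1, by rw [Finset.card_image_of_injective _ π.injective]; exact hF.2⟩

lemma aut_image_edges {π : Equiv.Perm α} (h : π ∈ X.aut) {F : Finset α} (hF : F ∈ X.edges) :
    Finset.image ⇑π F ∈ X.edges := by
  rw [mem_edges'] at *
  exact ⟨(h F).1 hF.1, by rw [Finset.card_image_of_injective _ π.injective]; exact hF.2⟩

/-- Orbit-stabiliser. -/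
lemma card_aut_eq (S : Finset (Finset α)) (s : Finset α) (hs : s ∈ S)
    (hinv : ∀ π ∈ X.aut, Finset.image ⇑π s ∈ S)
    (htr : ∀ t ∈ S, ∃ π ∈ X.aut, Finset.image ⇑π s = t) :
    Nat.card X.aut = S.card * Nat.card (X.stab s) := by
  classical
  choose! g hg hgs using htr
  have e : X.aut ≃ S × X.stab s :=
    { toFun := fun π => (⟨Finset.image ⇑π.1 s, hinv _ π.2⟩,
        ⟨(g (Finset.image ⇑π.1 s))⁻¹ * π.1,
          X.aut.mul_mem (X.aut.inv_mem (hg _ (hinv _ π.2))) π.2, by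
            rw [Equiv.Perm.finset_image_mul]
            have h1 := hgs _ (hinv _ π.2)
            generalize Finset.image ⇑π.1 s = t at h1 ⊢
            calc Finset.image ⇑(g t)⁻¹ t
                = Finset.image ⇑(g t)⁻¹ (Finset.image ⇑(g t) s) := by rw [h1]
              _ = s := by ext x; simp⟩)
      invFun := fun p => ⟨g p.1.1 * p.2.1, X.aut.mul_mem (hg _ p.1.2) p.2.2.1⟩
      left_inv := by
        intro π
        ext1
        simp
      right_inv := by
        rintro ⟨⟨t, ht⟩, ⟨σ, hσ⟩⟩
        have : Finset.image ⇑(g t * σ) s = t := by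
          rw [Equiv.Perm.finset_image_mul, hσ.2, hgs _ ht]
        ext1
        · ext1
          exact this
        · ext1
          change (g (Finset.image ⇑(g t * σ) s))⁻¹ * (g t * σ) = σ
          rw [this]; simp }
  rw [Nat.card_congr e, Nat.card_prod]
  simp

/-- Every face has three edges. -/
lemma edges_below {F : Finset α} (hF : F ∈ X.faces) :
    (X.edges.filter fun e => e ⊆ F).card = 3 := by
  have hF' := (X.mem_faces').1 hF
  have : (X.edges.filter fun e => e ⊆ F) = F.powersetCard 2 := by
    ext e
    simp only [Finset.mem_filter, mem_edges', Finset.mem_powersetCard]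
    constructor
    · rintro ⟨⟨_, h⟩, h'⟩
      exact ⟨h', h⟩
    · rintro ⟨h', h⟩
      exact ⟨⟨X.down_closed F hF'.1 e (Finset.card_pos.1 (by omega)) h', h⟩, h'⟩
  rw [this, Finset.card_powersetCard, hF'.2]
  rfl

lemma three_faces : X.faces.card * 3 = X.edges.card * 2 := by
  apply Finset.card_mul_eq_card_mul (fun F e => e ⊆ F)
  · intro F hF
    exact X.edges_below hF
  · intro e he
    have he' := (X.mem_edges').1 he
    rw [← X.edge_in_two_faces e he'.1 he'.2]
    congr 1
    ext F
    simp only [Finset.bipartiteBelow, Finset.mem_filter, mem_faces']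
    tauto

lemma exists_face : ∃ F, F ∈ X.faces := by
  obtain ⟨F, h, h'⟩ := X.dim_two
  exact ⟨F, (X.mem_faces').2 ⟨h, h'⟩⟩

lemma exists_edge : ∃ e, e ∈ X.edges := by
  obtain ⟨F, hF⟩ := X.exists_face
  have := X.edges_below hF
  obtain ⟨e, he⟩ := Finset.card_pos.1 (by rw [this]; norm_num :
    0 < (X.edges.filter fun e => e ⊆ F).card)
  exact ⟨e, (Finset.mem_filter.1 he).1⟩

lemma edge_of_pair {F : Finset α} (hF : F ∈ X.faces) {a b : α} (ha : a ∈ F) (hb : b ∈ F)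
    (hab : a ≠ b) : ({a, b} : Finset α) ∈ X.edges := by
  refine (X.mem_edges').2 ⟨X.down_closed F ((X.mem_faces').1 hF).1 _ (by simp) ?_,
    Finset.card_pair hab⟩
  intro x hx
  simp only [Finset.mem_insert, Finset.mem_singleton] at hx
  rcases hx with rfl | rfl <;> assumption

lemma vertex_in_face (v : α) : ∃ F ∈ X.faces, v ∈ F := by
  obtain ⟨F, hF, h, h3⟩ := X.pure_two _ (X.all_vertices v)
  exact ⟨F, (X.mem_faces').2 ⟨hF, h3⟩, h (by simp)⟩

lemma vertex_in_edge (v : α) : ∃ e ∈ X.edges, v ∈ e := by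
  obtain ⟨F, hF, hv⟩ := X.vertex_in_face v
  obtain ⟨w, hw, hne⟩ := Finset.exists_mem_ne (by rw [((X.mem_faces').1 hF).2]; norm_num) v
  exact ⟨{v, w}, X.edge_of_pair hF hv hw hne.symm, by simp⟩

lemma face_of_edge {e : Finset α} (he : e ∈ X.edges) : ∃ F ∈ X.faces, e ⊆ F := by
  obtain ⟨F, hF, h, h3⟩ := X.pure_two _ ((X.mem_edges').1 he).1
  exact ⟨F, (X.mem_faces').2 ⟨hF, h3⟩, h⟩

/-- If a face containing an edge is fixed pointwise, so is every face containing the edge. -/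
lemma fix_next {π : Equiv.Perm α} (hπ : π ∈ X.aut) {A C e : Finset α} (he : e ∈ X.edges)
    (hA : A ∈ X.faces) (hC : C ∈ X.faces) (heA : e ⊆ A) (heC : e ⊆ C)
    (hfix : ∀ x ∈ A, π x = x) : ∀ x ∈ C, π x = x := by
  classical
  by_cases hAC : C = A
  · subst hAC; exact hfix
  have he' := (X.mem_edges').1 he
  have hA' := (X.mem_faces').1 hA
  have hC' := (X.mem_faces').1 hC
  have h2 := X.edge_in_two_faces e he'.1 he'.2
  have hAi : Finset.image ⇑π A = A := by
    calc Finset.image ⇑π A = Finset.image id A := Finset.image_congr (fun x hx => hfix x hx)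
      _ = A := Finset.image_id
  have hei : Finset.image ⇑π e = e := by
    calc Finset.image ⇑π e = Finset.image id e :=
          Finset.image_congr (fun x hx => hfix x (heA hx))
      _ = e := Finset.image_id
  have hD := X.aut_image_faces hπ hC
  have hD' := (X.mem_faces').1 hD
  have heD : e ⊆ Finset.image ⇑π C := by
    conv_lhs => rw [← hei]
    exact Finset.image_subset_image heC
  have hDA : Finset.image ⇑π C ≠ A := by
    intro h
    rw [← hAi] at h
    exact hAC (Finset.image_injective π.injective h)
  have hDC : Finset.image ⇑π C = C := by
    by_contra hne
    have hsub : ({A, C, Finset.image ⇑π C} : Finset (Finset α)) ⊆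
        X.cplx.filter (fun F => e ⊆ F ∧ F.card = 3) := by
      intro F hF
      simp only [Finset.mem_insert, Finset.mem_singleton] at hF
      rw [Finset.mem_filter]
      rcases hF with rfl | rfl | rfl
      · exact ⟨hA'.1, heA, hA'.2⟩
      · exact ⟨hC'.1, heC, hC'.2⟩
      · exact ⟨hD'.1, heD, hD'.2⟩
    have := Finset.card_le_card hsub
    rw [Finset.card_eq_three.2 ⟨_, _, _, Ne.symm hAC, Ne.symm hDA, Ne.symm hne, rfl⟩] at this
    omega
  intro x hx
  by_cases hxe : x ∈ e
  · exact hfix x (heA hxe)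
  have hcard : (C \ e).card = 1 := by
    rw [Finset.card_sdiff_of_subset heC]; omega
  have hx1 : x ∈ C \ e := Finset.mem_sdiff.2 ⟨hx, hxe⟩
  have hx2 : π x ∈ C \ e := by
    refine Finset.mem_sdiff.2 ⟨?_, ?_⟩
    · rw [← hDC]; exact Finset.mem_image_of_mem _ hx
    · intro h
      have h1 := hfix _ (heA h)
      have h3 := π.injective h1
      rw [h3] at h
      exact hxe h
  exact Finset.card_le_one.1 hcard.le _ hx2 _ hx1

/-- Rigidity: an automorphism fixing a face pointwise is the identity. -/
lemma rigid {π : Equiv.Perm α} (hπ : π ∈ X.aut) {F : Finset α} (hF : F ∈ X.faces)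
    (hfix : ∀ x ∈ F, π x = x) : π = 1 := by
  have hF' := (X.mem_faces').1 hF
  have key : ∀ B, Relation.ReflTransGen
      (fun A B => A ∈ X.cplx ∧ B ∈ X.cplx ∧ (A ∩ B).card = 2) F B →
      ∀ C ∈ X.faces, B ⊆ C → ∀ x ∈ C, π x = x := by
    intro B hB
    induction hB with
    | refl =>
      intro C hC hFC
      have hC' := (X.mem_faces').1 hC
      have : F = C := Finset.eq_of_subset_of_card_le hFC (by omega)
      subst this
      exact hfix
    | @tail A B _ hAB ih =>
      intro C hC hBC
      obtain ⟨hA, hB, h2⟩ := hAB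
      obtain ⟨A1, hA1, hAA1, hA13⟩ := X.pure_two A hA
      have hA1' : A1 ∈ X.faces := (X.mem_faces').2 ⟨hA1, hA13⟩
      have he : A ∩ B ∈ X.edges := (X.mem_edges').2
        ⟨X.down_closed A hA _ (Finset.card_pos.1 (by omega)) Finset.inter_subset_left, h2⟩
      exact X.fix_next hπ he hA1' hC (Finset.inter_subset_left.trans hAA1)
        (Finset.inter_subset_right.trans hBC) (ih A1 hA1' hAA1)
  ext x
  obtain ⟨G, hG, hx⟩ := X.vertex_in_face x
  have hG' := (X.mem_faces').1 hG
  exact key G (X.connected F hF'.1 G hG'.1 hF'.2 hG'.2) G hG (Finset.Subset.refl _) x hx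

/-- A face stabiliser of order six induces the full symmetric group on the face. -/
lemma stab_full {F : Finset α} (hF : F ∈ X.faces) (h6 : Nat.card (X.stab F) = 6)
    (τ : Equiv.Perm F) : ∃ π ∈ X.stab F, ∀ x : F, π x = τ x := by
  classical
  have hmem : ∀ π ∈ X.stab F, ∀ x, x ∈ F ↔ π x ∈ F := by
    intro π hπ x
    constructor
    · intro hx
      have := Finset.mem_image_of_mem π hx
      rwa [hπ.2] at this
    · intro hx
      rw [← hπ.2] at hx
      obtain ⟨y, hy, hyx⟩ := Finset.mem_image.1 hx
      rw [← π.injective hyx]; exact hy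
  let f : X.stab F → Equiv.Perm F := fun π => π.1.subtypePerm (fun x => (hmem π.1 π.2 x).symm)
  have hf : Function.Injective f := by
    rintro ⟨π, hπ⟩ ⟨σ, hσ⟩ h
    have h1 : ∀ x ∈ F, π x = σ x := by
      intro x hx
      have := congrArg (fun p : Equiv.Perm F => (p ⟨x, hx⟩ : α)) h
      simpa [f] using this
    have h2 : σ⁻¹ * π = 1 := by
      refine X.rigid (X.aut.mul_mem (X.aut.inv_mem hσ.1) hπ.1) hF ?_
      intro x hx
      simp [h1 x hx]
    ext1
    exact (inv_mul_eq_one.1 h2).symm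
  have hb : Function.Bijective f := by
    rw [Nat.bijective_iff_injective_and_card]
    refine ⟨hf, ?_⟩
    rw [h6, Nat.card_perm, Nat.card_eq_fintype_card, Fintype.card_coe,
      ((X.mem_faces').1 hF).2]
    rfl
  obtain ⟨⟨π, hπ⟩, h⟩ := hb.2 τ
  refine ⟨π, hπ, fun x => ?_⟩
  rw [← h]
  rfl

lemma stab_trans_edges {F : Finset α} (hF : F ∈ X.faces) (h6 : Nat.card (X.stab F) = 6)
    {e₁ e₂ : Finset α} (he₁ : e₁ ∈ X.edges) (he₂ : e₂ ∈ X.edges) (h₁ : e₁ ⊆ F) (h₂ : e₂ ⊆ F) :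
    ∃ π ∈ X.aut, Finset.image ⇑π e₁ = e₂ := by
  classical
  have hF3 := ((X.mem_faces').1 hF).2
  have h12 := ((X.mem_edges').1 he₁).2
  have h22 := ((X.mem_edges').1 he₂).2
  obtain ⟨a, ha⟩ := Finset.card_eq_one.1 (by rw [Finset.card_sdiff_of_subset h₁]; omega :
    (F \ e₁).card = 1)
  obtain ⟨b, hb⟩ := Finset.card_eq_one.1 (by rw [Finset.card_sdiff_of_subset h₂]; omega :
    (F \ e₂).card = 1)
  have ha' : a ∈ F \ e₁ := by rw [ha]; simp
  have hb' : b ∈ F \ e₂ := by rw [hb]; simp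
  rw [Finset.mem_sdiff] at ha' hb'
  obtain ⟨π, hπ, hπx⟩ := X.stab_full hF h6 (Equiv.swap ⟨a, ha'.1⟩ ⟨b, hb'.1⟩)
  refine ⟨π, hπ.1, ?_⟩
  have hab : π a = b := by
    have := hπx ⟨a, ha'.1⟩
    simpa using this
  have e1 : e₁ = F \ {a} := by rw [← ha, Finset.sdiff_sdiff_eq_self h₁]
  have e2 : e₂ = F \ {b} := by rw [← hb, Finset.sdiff_sdiff_eq_self h₂]
  rw [e1, e2, Finset.image_sdiff _ _ π.injective, hπ.2, Finset.image_singleton, hab]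

lemma faceOrbits_iff : X.faceOrbits.ncard = 1 ↔
    (∀ F ∈ X.faces, ∀ G ∈ X.faces, ∃ π ∈ X.aut, Finset.image ⇑π F = G) := by
  constructor
  · intro h F hF G hG
    obtain ⟨O, hO⟩ := Set.ncard_eq_one.1 h
    have h1 : X.orbit F ∈ X.faceOrbits := ⟨F, hF, rfl⟩
    have h2 : X.orbit G ∈ X.faceOrbits := ⟨G, hG, rfl⟩
    rw [hO, Set.mem_singleton_iff] at h1 h2
    have : G ∈ X.orbit G := ⟨1, X.aut.one_mem, by simp⟩
    rw [h2, ← h1] at this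
    exact this
  · intro h
    obtain ⟨F, hF⟩ := X.exists_face
    rw [Set.ncard_eq_one]
    refine ⟨(X.faces : Set (Finset α)), ?_⟩
    have key : ∀ G ∈ X.faces, X.orbit G = (X.faces : Set (Finset α)) := by
      intro G hG
      ext H
      constructor
      · rintro ⟨π, hπ, rfl⟩
        exact X.aut_image_faces hπ hG
      · intro hH
        exact h G hG H hH
    ext O
    rw [Set.mem_singleton_iff]
    constructor
    · rintro ⟨G, hG, rfl⟩
      exact key G hG
    · rintro rfl
      exact ⟨F, hF, (key F hF).symm⟩

/-- Edge-transitivity gives a single vertex orbit, as faces are triangles. -/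
lemma vertexOrbits_of_edgeTransitive (h : X.EdgeTransitive) : X.vertexOrbits.ncard = 1 := by
  classical
  let R : α → α → Prop := fun v w => ∃ π ∈ X.aut, π v = w
  have hsymm : ∀ {v w}, R v w → R w v := by
    rintro v w ⟨π, hπ, rfl⟩
    exact ⟨π⁻¹, X.aut.inv_mem hπ, by simp⟩
  have htrans : ∀ {u v w}, R u v → R v w → R u w := by
    rintro u v w ⟨π, hπ, rfl⟩ ⟨σ, hσ, rfl⟩
    exact ⟨σ * π, X.aut.mul_mem hσ hπ, by simp⟩
  have hedge : ∀ {x y z w : α}, ({x, y} : Finset α) ∈ X.edges → ({z, w} : Finset α) ∈ X.edges →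
      (R x z ∨ R y z) ∧ (R x w ∨ R y w) := by
    intro x y z w h1 h2
    obtain ⟨π, hπ, hi⟩ := h _ h1 _ h2
    have hz : ∀ t ∈ ({z, w} : Finset α), R x t ∨ R y t := by
      intro t ht
      rw [← hi] at ht
      obtain ⟨s, hs, rfl⟩ := Finset.mem_image.1 ht
      simp only [Finset.mem_insert, Finset.mem_singleton] at hs
      rcases hs with rfl | rfl
      · exact Or.inl ⟨π, hπ, rfl⟩
      · exact Or.inr ⟨π, hπ, rfl⟩
    exact ⟨hz z (by simp), hz w (by simp)⟩
  obtain ⟨F, hF⟩ := X.exists_face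
  obtain ⟨a, b, c, hab, hac, hbc, rfl⟩ := Finset.card_eq_three.1 ((X.mem_faces').1 hF).2
  have eab := X.edge_of_pair hF (a := a) (b := b) (by simp) (by simp) hab
  have eac := X.edge_of_pair hF (a := a) (b := c) (by simp) (by simp) hac
  have ebc := X.edge_of_pair hF (a := b) (b := c) (by simp) (by simp) hbc
  have hxy : ∃ x y : α, ({x, y} : Finset α) ∈ X.edges ∧ R x y := by
    rcases (hedge eab eac).2 with h | h
    · exact ⟨a, c, eac, h⟩
    · exact ⟨b, c, ebc, h⟩
  obtain ⟨x, y, exy, hR⟩ := hxy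
  have hall : ∀ v, R x v := by
    intro v
    obtain ⟨e, he, hv⟩ := X.vertex_in_edge v
    obtain ⟨π, hπ, hi⟩ := h _ exy _ he
    rw [← hi] at hv
    obtain ⟨s, hs, rfl⟩ := Finset.mem_image.1 hv
    simp only [Finset.mem_insert, Finset.mem_singleton] at hs
    rcases hs with rfl | rfl
    · exact ⟨π, hπ, rfl⟩
    · exact htrans hR ⟨π, hπ, rfl⟩
  rw [Set.ncard_eq_one]
  refine ⟨Set.univ, ?_⟩
  have key : ∀ v, {w | ∃ π ∈ X.aut, π v = w} = (Set.univ : Set α) := by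
    intro v
    ext w
    simp only [Set.mem_univ, iff_true]
    exact htrans (hsymm (hall v)) (hall w)
  ext O
  rw [Set.mem_singleton_iff]
  constructor
  · rintro ⟨v, rfl⟩
    exact key v
  · rintro rfl
    exact ⟨x, (key x).symm⟩

end Aux

end SimplicialSurface

/-- A simplicial surface `X` is edge-transitive with exactly one face orbit and edge
stabilisers of order `4` if and only if it is face-transitive with exactly one vertex orbit
and face stabilisers of order `6`. -/
theorem fe_one_four_iff_vf_one_six
    {α : Type*} [Fintype α] [DecidableEq α] (X : SimplicialSurface α) :
    (X.EdgeTransitive ∧ X.faceOrbits.ncard = 1 ∧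
        ∀ e ∈ X.edges, Nat.card (X.stab e) = 4) ↔
      ((∀ F ∈ X.faces, ∀ G ∈ X.faces, ∃ π ∈ X.aut, Finset.image ⇑π F = G) ∧
        X.vertexOrbits.ncard = 1 ∧
        ∀ F ∈ X.faces, Nat.card (X.stab F) = 6) := by
  rw [X.faceOrbits_iff]
  have h32 := X.three_faces
  constructor
  · rintro ⟨hE, hFt, h4⟩
    refine ⟨hFt, X.vertexOrbits_of_edgeTransitive hE, fun F hF => ?_⟩
    obtain ⟨e, he⟩ := X.exists_edge
    have c1 := X.card_aut_eq X.edges e he (fun π hπ => X.aut_image_edges hπ he) (hE e he)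
    have c2 := X.card_aut_eq X.faces F hF (fun π hπ => X.aut_image_faces hπ hF) (hFt F hF)
    rw [h4 e he] at c1
    have hpos : 0 < X.faces.card := Finset.card_pos.2 ⟨F, hF⟩
    apply Nat.eq_of_mul_eq_mul_left hpos
    omega
  · rintro ⟨hFt, -, h6⟩
    have hE : X.EdgeTransitive := by
      intro e₁ he₁ e₂ he₂
      obtain ⟨F₁, hF₁, h₁⟩ := X.face_of_edge he₁
      obtain ⟨F₂, hF₂, h₂⟩ := X.face_of_edge he₂
      obtain ⟨π, hπ, rfl⟩ := hFt F₁ hF₁ F₂ hF₂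
      obtain ⟨σ, hσ, h⟩ := X.stab_trans_edges hF₂ (h6 _ hF₂) (X.aut_image_edges hπ he₁) he₂
        (Finset.image_subset_image h₁) h₂
      exact ⟨σ * π, X.aut.mul_mem hσ hπ, by rw [Equiv.Perm.finset_image_mul, h]⟩
    refine ⟨hE, hFt, fun e he => ?_⟩
    obtain ⟨F, hF⟩ := X.exists_face
    have c1 := X.card_aut_eq X.edges e he (fun π hπ => X.aut_image_edges hπ he) (hE e he)
    have c2 := X.card_aut_eq X.faces F hF (fun π hπ => X.aut_image_faces hπ hF) (hFt F hF)
    rw [h6 F hF] at c2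
    have hpos : 0 < X.edges.card := Finset.card_pos.2 ⟨e, he⟩
    apply Nat.eq_of_mul_eq_mul_left hpos
    omega
end

section
/- Let X be an edge-transitive simplicial surface such that Aut(X) has exactly two orbits on the faces X_2. Then every vertex of X has even degree. -/
open Finset

theorem SimplicialSurface.orbit_image {α : Type*} [Fintype α] [DecidableEq α]
    (X : SimplicialSurface α) (π : Equiv.Perm α) (hπ : π ∈ X.aut) (s : Finset α) :
    X.orbit (Finset.image π s) = X.orbit s := by
  ext t
  constructor
  · rintro ⟨σ, hσ, rfl⟩
    exact ⟨σ * π, X.aut.mul_mem hσ hπ, Equiv.Perm.finset_image_mul _ _ _⟩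
  · rintro ⟨σ, hσ, rfl⟩
    refine ⟨σ * π⁻¹, X.aut.mul_mem hσ (X.aut.inv_mem hπ), ?_⟩
    rw [← Equiv.Perm.finset_image_mul]
    simp

theorem SimplicialSurface.orbit_const {α : Type*} [Fintype α] [DecidableEq α]
    (X : SimplicialSurface α) (hX : X.EdgeTransitive) (A B : Finset α)
    (hA : A ∈ X.faces) (hB : B ∈ X.faces) (hAB : (A ∩ B).card = 2)
    (h : X.orbit A = X.orbit B) (G : Finset α) (hG : G ∈ X.faces) :
    X.orbit G = X.orbit A := by
  simp only [SimplicialSurface.faces, Finset.mem_filter] at hA hB hG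
  obtain ⟨e, heG, he⟩ := Finset.exists_subset_card_eq (s := G) (n := 2) (by omega)
  have hec : e ∈ X.cplx :=
    X.down_closed G hG.1 e (Finset.card_pos.1 (by omega)) heG
  have hABc : A ∩ B ∈ X.cplx :=
    X.down_closed A hA.1 _ (Finset.card_pos.1 (by omega)) Finset.inter_subset_left
  obtain ⟨π, hπ, hπe⟩ := hX e (by simp [SimplicialSurface.edges, hec, he]) (A ∩ B)
    (by simp [SimplicialSurface.edges, hABc, hAB])
  have hne : A ≠ B := by
    rintro rfl
    rw [Finset.inter_self] at hAB
    omega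
  have hcard := X.edge_in_two_faces _ hABc hAB
  have hsub : ({A, B} : Finset (Finset α)) ⊆
      X.cplx.filter (fun F => A ∩ B ⊆ F ∧ F.card = 3) := by
    intro F hF
    simp only [Finset.mem_insert, Finset.mem_singleton] at hF
    rcases hF with rfl | rfl
    · simp [hA.1, hA.2, Finset.inter_subset_left]
    · simp [hB.1, hB.2, Finset.inter_subset_right]
  have heq := Finset.eq_of_subset_of_card_le hsub
    (by rw [hcard, Finset.card_pair hne])
  have hmem : Finset.image π G ∈ X.cplx.filter (fun F => A ∩ B ⊆ F ∧ F.card = 3) := by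
    rw [Finset.mem_filter]
    refine ⟨(hπ G).1 hG.1, ?_, ?_⟩
    · rw [← hπe]
      exact Finset.image_subset_image heG
    · rw [Finset.card_image_of_injective _ π.injective, hG.2]
  rw [← heq, Finset.mem_insert, Finset.mem_singleton] at hmem
  rw [← X.orbit_image π hπ G]
  rcases hmem with h' | h'
  · rw [h']
  · rw [h', h]

/-- Let `X` be an edge-transitive simplicial surface such that `Aut(X)` has exactly two
orbits on the faces. Then every vertex of `X` has even degree. -/
theorem degree_even
    {α : Type*} [Fintype α] [DecidableEq α] (X : SimplicialSurface α)
    (hX : X.EdgeTransitive) (h2 : X.faceOrbits.ncard = 2) (v : α) :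
    Even (X.degree v) := by
  classical
  obtain ⟨O₁, O₂, hO, hS⟩ := Set.ncard_eq_two.1 h2
  have hcol : ∀ F ∈ X.faces, X.orbit F = O₁ ∨ X.orbit F = O₂ := by
    intro F hF
    have : X.orbit F ∈ X.faceOrbits := ⟨F, hF, rfl⟩
    rw [hS] at this
    simpa using this
  have hex₁ : ∃ F ∈ X.faces, O₁ = X.orbit F := by
    have : O₁ ∈ X.faceOrbits := by rw [hS]; simp
    exact this
  have hex₂ : ∃ F ∈ X.faces, O₂ = X.orbit F := by
    have : O₂ ∈ X.faceOrbits := by rw [hS]; simp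
    exact this
  have hdiff : ∀ A ∈ X.faces, ∀ B ∈ X.faces, (A ∩ B).card = 2 → X.orbit A ≠ X.orbit B := by
    intro A hA B hB hAB h
    obtain ⟨F, hF, rfl⟩ := hex₁
    obtain ⟨G, hG, rfl⟩ := hex₂
    exact hO ((X.orbit_const hX A B hA hB hAB h F hF).trans
      (X.orbit_const hX A B hA hB hAB h G hG).symm)
  obtain ⟨n, -, u, hinj, hu, hsurj, hrot⟩ := X.umbrella_exists v
  have huf : ∀ i, u i ∈ X.faces := fun i => by
    simp [SimplicialSurface.faces, (hu i).1, (hu i).2.1]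
  have hdeg : X.degree v = n := by
    have : X.faces.filter (fun F => v ∈ F) = Finset.univ.image u := by
      ext F
      simp only [SimplicialSurface.faces, Finset.mem_filter, Finset.mem_image,
        Finset.mem_univ, true_and]
      constructor
      · rintro ⟨⟨h1, h2⟩, h3⟩
        exact hsurj F h1 h2 h3
      · rintro ⟨i, rfl⟩
        exact ⟨⟨(hu i).1, (hu i).2.1⟩, (hu i).2.2⟩
    rw [SimplicialSurface.degree, this, Finset.card_image_of_injective _ hinj]
    simp
  have hswap : ∀ i, X.orbit (u (finRotate n i)) = O₁ ↔ ¬ X.orbit (u i) = O₁ := by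
    intro i
    have h := hdiff _ (huf i) _ (huf (finRotate n i)) (hrot i)
    rcases hcol _ (huf i) with h1 | h1 <;>
      rcases hcol _ (huf (finRotate n i)) with h3 | h3 <;>
      rw [h1, h3] at h ⊢ <;> simp [hO, hO.symm] at h ⊢
  have hcard : (Finset.univ.filter fun i : Fin n => ¬ X.orbit (u i) = O₁).card =
      (Finset.univ.filter fun i : Fin n => X.orbit (u i) = O₁).card := by
    refine Finset.card_equiv (finRotate n) ?_
    intro i
    simp only [Finset.mem_filter, Finset.mem_univ, true_and]
    exact (hswap i).symm
  have hsum := Finset.card_filter_add_card_filter_not (s := (Finset.univ : Finset (Fin n)))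
    (fun i => X.orbit (u i) = O₁)
  rw [hcard, Finset.card_univ, Fintype.card_fin] at hsum
  rw [hdeg]
  exact ⟨_, hsum.symm⟩
end

section
/- Let X be an edge-transitive simplicial surface such that Aut(X) has exactly two orbits on the faces X_2. Let v be a vertex of X of degree n and let (F_1,…,F_n) be an umbrella of v. Then there exists an automorphism φ in Aut(X) with φ(v) = v and φ(F_i) = F_{i+2} for all i (indices mod n). -/
open Finset

namespace SimplicialSurface

variable {α : Type*} [Fintype α] [DecidableEq α] (X : SimplicialSurface α)

lemma edge_of_subset {e F : Finset α} (hF : F ∈ X.faces) (he : e ⊆ F) (hc : e.card = 2) :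
    e ∈ X.edges := by
  rw [mem_edges']
  refine ⟨X.down_closed F (X.mem_faces'.1 hF).1 e ?_ he, hc⟩
  rw [← Finset.card_pos]; omega

lemma image_face {π : Equiv.Perm α} (hπ : π ∈ X.aut) {F : Finset α} (hF : F ∈ X.faces) :
    F.image π ∈ X.faces := by
  rw [mem_faces'] at *
  exact ⟨(hπ F).1 hF.1, by rw [Finset.card_image_of_injective _ π.injective]; exact hF.2⟩

lemma other_face {e F G H : Finset α} (hc : e.card = 2)
    (hF : F ∈ X.faces) (hG : G ∈ X.faces) (hH : H ∈ X.faces)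
    (eF : e ⊆ F) (eG : e ⊆ G) (eH : e ⊆ H) (hFG : G ≠ F) (hFH : H ≠ F) : G = H := by
  have he := X.mem_edges'.1 (X.edge_of_subset hF eF hc)
  have h := X.edge_in_two_faces e he.1 hc
  rw [mem_faces'] at hF hG hH
  by_contra hne
  have hsub : ({F, G, H} : Finset (Finset α)) ⊆
      X.cplx.filter (fun F => e ⊆ F ∧ F.card = 3) := by
    intro s hs
    simp only [Finset.mem_insert, Finset.mem_singleton] at hs
    rw [Finset.mem_filter]
    rcases hs with rfl | rfl | rfl
    · exact ⟨hF.1, eF, hF.2⟩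
    · exact ⟨hG.1, eG, hG.2⟩
    · exact ⟨hH.1, eH, hH.2⟩
  have h3 : ({F, G, H} : Finset (Finset α)).card = 3 :=
    Finset.card_eq_three.2 ⟨F, G, H, hFG.symm, hFH.symm, hne, rfl⟩
  have := Finset.card_le_card hsub
  omega

lemma orbit_mul {F G H : Finset α} (h1 : G ∈ X.orbit F) (h2 : H ∈ X.orbit G) :
    H ∈ X.orbit F := by
  obtain ⟨π, hπ, rfl⟩ := h1
  obtain ⟨σ, hσ, rfl⟩ := h2
  exact ⟨σ * π, X.aut.mul_mem hσ hπ, Equiv.Perm.finset_image_mul _ _ _⟩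

lemma orbit_symm {F G : Finset α} (h1 : G ∈ X.orbit F) : F ∈ X.orbit G := by
  obtain ⟨π, hπ, rfl⟩ := h1
  refine ⟨π⁻¹, X.aut.inv_mem hπ, ?_⟩
  ext x; simp

lemma orbit_self (F : Finset α) : F ∈ X.orbit F :=
  ⟨1, X.aut.one_mem, by simp⟩

lemma not_orbit (hX : X.EdgeTransitive) (h2 : X.faceOrbits.ncard = 2) {e F G : Finset α}
    (hc : e.card = 2) (hF : F ∈ X.faces) (hG : G ∈ X.faces) (eF : e ⊆ F) (eG : e ⊆ G)
    (hFG : F ≠ G) : G ∉ X.orbit F := by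
  intro hor
  have key : ∀ e' K H : Finset α, e'.card = 2 → K ∈ X.faces → H ∈ X.faces → e' ⊆ K → e' ⊆ H →
      H ∈ X.orbit K := by
    intro e' K H hc' hK hH eK eH
    by_cases hKH : H = K
    · subst hKH; exact X.orbit_self _
    obtain ⟨π, hπ, he⟩ := hX e (X.edge_of_subset hF eF hc) e' (X.edge_of_subset hK eK hc')
    have sF : e' ⊆ F.image π := he ▸ Finset.image_subset_image eF
    have sG : e' ⊆ G.image π := he ▸ Finset.image_subset_image eG
    have hF' := X.image_face hπ hF
    have hG' := X.image_face hπ hG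
    have hne : F.image π ≠ G.image π := fun h => hFG (Finset.image_injective π.injective h)
    have oF : F.image π ∈ X.orbit F := ⟨π, hπ, rfl⟩
    have oG : G.image π ∈ X.orbit F := X.orbit_mul hor ⟨π, hπ, rfl⟩
    have all : ∀ L ∈ X.faces, e' ⊆ L → L ∈ X.orbit F := by
      intro L hL eL
      by_cases h : L = F.image π
      · rw [h]; exact oF
      · rw [X.other_face hc' hF' hL hG' sF eL sG h hne.symm]; exact oG
    exact X.orbit_mul (X.orbit_symm (all K hK eK)) (all H hH eH)
  have all : ∀ H ∈ X.faces, H ∈ X.orbit F := by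
    intro H hH
    have hF3 := X.mem_faces'.1 hF
    have hH3 := X.mem_faces'.1 hH
    have hr := X.connected F hF3.1 H hH3.1 hF3.2 hH3.2
    have : ∀ K ∈ X.faces, H ⊆ K → K ∈ X.orbit F := by
      clear hH hH3
      induction hr with
      | refl =>
        intro K hK hs
        have : F = K := Finset.eq_of_subset_of_card_le hs
          (by rw [hF3.2, (X.mem_faces'.1 hK).2])
        exact this ▸ X.orbit_self _
      | tail _ hAB ih =>
        intro K hK hs
        obtain ⟨hA, hB, hcard⟩ := hAB
        obtain ⟨L, hL, hAL, hL3⟩ := X.pure_two _ hA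
        have hL' := X.mem_faces'.2 ⟨hL, hL3⟩
        exact X.orbit_mul (ih L hL' hAL) (key _ L K hcard hL' hK
          (Finset.inter_subset_left.trans hAL) (Finset.inter_subset_right.trans hs))
    exact this H hH subset_rfl
  have hsub : X.faceOrbits ⊆ {X.orbit F} := by
    rintro O ⟨H, hH, rfl⟩
    rw [Set.mem_singleton_iff]
    ext K
    exact ⟨fun h => X.orbit_mul (all H hH) h,
      fun h => X.orbit_mul (X.orbit_symm (all H hH)) h⟩
  have := Set.ncard_le_ncard hsub (Set.finite_singleton _)
  rw [Set.ncard_singleton] at this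
  omega

lemma exists_stab (hX : X.EdgeTransitive) (h2 : X.faceOrbits.ncard = 2) {e e' F : Finset α}
    (hc : e.card = 2) (hc' : e'.card = 2) (hF : F ∈ X.faces) (eF : e ⊆ F) (eF' : e' ⊆ F) :
    ∃ π ∈ X.aut, e.image π = e' ∧ F.image π = F := by
  obtain ⟨π, hπ, he⟩ := hX e (X.edge_of_subset hF eF hc) e' (X.edge_of_subset hF eF' hc')
  refine ⟨π, hπ, he, ?_⟩
  by_contra hne
  exact X.not_orbit hX h2 hc' hF (X.image_face hπ hF) eF'
    (he ▸ Finset.image_subset_image eF) (Ne.symm hne) ⟨π, hπ, rfl⟩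

lemma perm_cases {a b c x y z : α} (π : Equiv.Perm α) (hab : a ≠ b) (hac : a ≠ c) (hbc : b ≠ c)
    (hxy : x ≠ y) (hxz : x ≠ z) (hyz : y ≠ z)
    (h1 : Finset.image π {a, b} = {x, y}) (h2 : Finset.image π {a, b, c} = {x, y, z}) :
    π c = z ∧ ((π a = x ∧ π b = y) ∨ (π a = y ∧ π b = x)) := by
  have ha : π a ∈ ({x, y} : Finset α) := h1 ▸ Finset.mem_image_of_mem _ (by simp)
  have hb : π b ∈ ({x, y} : Finset α) := h1 ▸ Finset.mem_image_of_mem _ (by simp)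
  have hcc : π c ∈ ({x, y, z} : Finset α) := h2 ▸ Finset.mem_image_of_mem _ (by simp)
  have i1 := π.injective.ne hab
  have i2 := π.injective.ne hac
  have i3 := π.injective.ne hbc
  simp only [Finset.mem_insert, Finset.mem_singleton] at ha hb hcc
  grind

lemma exists_rot (hX : X.EdgeTransitive) (h2 : X.faceOrbits.ncard = 2) {a b c : α}
    (hab : a ≠ b) (hac : a ≠ c) (hbc : b ≠ c) (hF : {a, b, c} ∈ X.faces) :
    ∃ π ∈ X.aut, π a = b ∧ π b = c ∧ π c = a := by
  obtain ⟨g, hg, g1, g2⟩ := X.exists_stab hX h2 (e := {a, b}) (e' := {b, c})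
    (Finset.card_pair hab) (Finset.card_pair hbc) hF (by grind) (by grind)
  obtain ⟨h, hh, h1, h3⟩ := X.exists_stab hX h2 (e := {a, b}) (e' := {c, a})
    (Finset.card_pair hab) (Finset.card_pair hac.symm) hF (by grind) (by grind)
  have p1 := perm_cases g hab hac hbc hbc hab.symm hac.symm g1 (g2.trans (by grind))
  have p2 := perm_cases h hab hac hbc hac.symm hbc.symm hab h1 (h3.trans (by grind))
  obtain ⟨gc, ⟨ga, gb⟩ | ⟨ga, gb⟩⟩ := p1
  · exact ⟨g, hg, ga, gb, gc⟩
  obtain ⟨hc, ⟨ha, hb⟩ | ⟨ha, hb⟩⟩ := p2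
  · exact ⟨h * h, X.aut.mul_mem hh hh, by simp [ha, hb, hc], by simp [ha, hb, hc],
      by simp [ha, hb, hc]⟩
  · exact ⟨h * g, X.aut.mul_mem hh hg, by simp [*], by simp [*], by simp [*]⟩

/-- The image of the third vertex of the neighbouring face is determined. -/
lemma third_vertex {φ : Equiv.Perm α} (hφ : φ ∈ X.aut) {p q r s p' q' r' s' : α}
    (hpq : p ≠ q)
    (hsp : s ≠ p) (hsq : s ≠ q)
    (hF : {p, q, r} ∈ X.faces) (hG : {p, q, s} ∈ X.faces)
    (hFG : ({p, q, s} : Finset α) ≠ {p, q, r})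
    (hF' : {p', q', r'} ∈ X.faces) (hG' : {p', q', s'} ∈ X.faces)
    (hFG' : ({p', q', s'} : Finset α) ≠ {p', q', r'})
    (h1 : φ p = p') (h2 : φ q = q') (h3 : φ r = r') : φ s = s' := by
  subst h1 h2 h3
  have e1 : Finset.image φ {p, q, r} = {φ p, φ q, φ r} := by simp [Finset.image_insert]
  have e2 : Finset.image φ {p, q, s} = {φ p, φ q, φ s} := by simp [Finset.image_insert]
  have hne : ({φ p, φ q, φ s} : Finset α) ≠ {φ p, φ q, φ r} := by
    rw [← e1, ← e2]; exact fun h => hFG (Finset.image_injective φ.injective h)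
  have hG2 := X.image_face hφ hG
  rw [e2] at hG2
  have := X.other_face (e := {φ p, φ q}) (Finset.card_pair (φ.injective.ne hpq)) hF' hG2 hG'
    (by grind) (by grind) (by grind) hne hFG'
  have hs : φ s ∈ ({φ p, φ q, s'} : Finset α) := by rw [← this]; simp
  have i1 := φ.injective.ne hsp
  have i2 := φ.injective.ne hsq
  simpa [i1, i2] using hs

lemma exists_shift (hX : X.EdgeTransitive) (h2 : X.faceOrbits.ncard = 2) {v a b c d : α}
    (ha : a ≠ v) (hb : b ≠ v) (hc : c ≠ v) (hd : d ≠ v)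
    (hab : a ≠ b) (hbc : b ≠ c) (hcd : c ≠ d)
    (hF : {v, a, b} ∈ X.faces) (hG : {v, b, c} ∈ X.faces) (hH : {v, c, d} ∈ X.faces)
    (hFG : ({v, a, b} : Finset α) ≠ {v, b, c}) (hGH : ({v, b, c} : Finset α) ≠ {v, c, d}) :
    ∃ φ ∈ X.aut, φ v = v ∧ φ a = c ∧ φ b = d := by
  obtain ⟨ρ, hρ, r1, r2, r3⟩ := X.exists_rot hX h2 hb hbc hc.symm (a := b) (b := v) (c := c)
    (by convert hG using 1; grind)
  obtain ⟨τ, hτ, t1, t2, t3⟩ := X.exists_rot hX h2 hc hcd hd.symm (a := c) (b := v) (c := d)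
    (by convert hH using 1; grind)
  have e1 : ({v, a, b} : Finset α) = {b, v, a} := by grind
  have e2 : ({v, b, c} : Finset α) = {b, v, c} := by grind
  have e3 : ({v, b, c} : Finset α) = {v, c, b} := by grind
  have hra : ρ a = d := X.third_vertex hρ (p := b) (q := v) (r := c) (s := a) (p' := v) (q' := c)
    (r' := b) (s' := d) hb hab ha (e2 ▸ hG) (e1 ▸ hF) (by rw [← e1, ← e2]; exact hFG)
    (e3 ▸ hG) hH (by rw [← e3]; exact hGH.symm) r1 r2 r3
  exact ⟨τ * ρ, X.aut.mul_mem hτ hρ, by simp [*], by simp [*], by simp [*]⟩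

end SimplicialSurface

/-- Let `X` be an edge-transitive simplicial surface such that `Aut(X)` has exactly two
orbits on the faces, let `v` be a vertex of degree `n` and `(F_1, …, F_n)` an umbrella of
`v`. Then some automorphism `φ` of `X` fixes `v` and satisfies `φ(F_i) = F_{i+2}` for all
`i` (indices mod `n`). -/
theorem exists_umbrella_shift
    {α : Type*} [Fintype α] [DecidableEq α] (X : SimplicialSurface α)
    (hX : X.EdgeTransitive) (h2 : X.faceOrbits.ncard = 2)
    (v : α) (n : ℕ) (hn : 0 < n) (u : Fin n → Finset α)
    (hinj : Function.Injective u)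
    (hmem : ∀ i, u i ∈ X.faces ∧ v ∈ u i)
    (hsurj : ∀ F ∈ X.faces, v ∈ F → ∃ i, u i = F)
    (hconsec : ∀ i : Fin n, (u i ∩ u (finRotate n i)).card = 2) :
    ∃ φ ∈ X.aut, φ v = v ∧
      ∀ i : Fin n, Finset.image ⇑φ (u i) = u (finRotate n (finRotate n i)) := by
  have hcard : ∀ i, (u i).card = 3 := fun i => (X.mem_faces'.1 (hmem i).1).2
  rcases n with _ | _ | _ | m
  · omega
  · have h := hconsec 0
    rw [Subsingleton.elim (finRotate 1 0) 0, Finset.inter_self, hcard] at h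
    omega
  · refine ⟨1, X.aut.one_mem, rfl, fun i => ?_⟩
    have : finRotate 2 (finRotate 2 i) = i := by revert i; decide
    rw [this]; simp
  simp only [Nat.add_assoc, Nat.reduceAdd, finRotate_apply] at *
  have hw : ∀ i : Fin (m + 3), ∃ w, w ≠ v ∧ u i ∩ u (i + 1) = {v, w} := by
    intro i
    obtain ⟨x, y, hxy, he⟩ := Finset.card_eq_two.1 (hconsec i)
    have hv : v ∈ u i ∩ u (i + 1) := Finset.mem_inter.2 ⟨(hmem _).2, (hmem _).2⟩
    rw [he] at hv
    simp only [Finset.mem_insert, Finset.mem_singleton] at hv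
    rcases hv with rfl | rfl
    · exact ⟨y, hxy.symm, he⟩
    · exact ⟨x, hxy, by rw [he, Finset.pair_comm]⟩
  choose w hwv hwe using hw
  have n1 : ∀ i : Fin (m + 3), i + 1 ≠ i := by
    intro i h
    have h1 : (1 : Fin (m + 3)) = 0 := by simpa using h
    simp [Fin.ext_iff] at h1
  have n2 : ∀ i : Fin (m + 3), i + 1 + 1 ≠ i := by
    intro i h
    rw [add_assoc] at h
    have h1 : (1 + 1 : Fin (m + 3)) = 0 := by simpa using h
    simp [Fin.ext_iff, Fin.val_add] at h1
    rw [Nat.mod_eq_of_lt (by omega)] at h1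
    omega
  have s1 : ∀ i, ({v, w i} : Finset α) ⊆ u i := fun i => hwe i ▸ Finset.inter_subset_left
  have s2 : ∀ i, ({v, w i} : Finset α) ⊆ u (i + 1) := fun i => hwe i ▸ Finset.inter_subset_right
  have hww : ∀ i, w i ≠ w (i + 1) := by
    intro i h
    have := X.other_face (e := {v, w i}) (Finset.card_pair (hwv i).symm) (hmem (i + 1)).1
      (hmem i).1 (hmem (i + 1 + 1)).1 (s2 i) (s1 i) (h ▸ s2 (i + 1))
      (fun h => n1 i (hinj h).symm) (fun h => n1 _ (hinj h))
    exact n2 i (hinj this).symm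
  have hu : ∀ i, u (i + 1) = {v, w i, w (i + 1)} := by
    intro i
    symm
    apply Finset.eq_of_subset_of_card_le
    · have a1 := s2 i
      have a2 := s1 (i + 1)
      grind
    · rw [hcard, Finset.card_eq_three.2 ⟨v, w i, w (i + 1), (hwv _).symm, (hwv _).symm, hww i, rfl⟩]
  have hf : ∀ i, ({v, w i, w (i + 1)} : Finset α) ∈ X.faces := fun i => hu i ▸ (hmem _).1
  have hne : ∀ i, ({v, w i, w (i + 1)} : Finset α) ≠ {v, w (i + 1), w (i + 1 + 1)} := by
    intro i h
    rw [← hu, ← hu] at h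
    exact n1 _ (hinj h).symm
  obtain ⟨φ, hφ, hv, ha, hb⟩ := X.exists_shift hX h2 (hwv 0) (hwv (0 + 1)) (hwv (0 + 1 + 1))
    (hwv (0 + 1 + 1 + 1)) (hww _) (hww _) (hww _) (hf _) (hf _) (hf _) (hne _) (hne _)
  have step : ∀ i, φ (w i) = w (i + 1 + 1) → φ (w (i + 1)) = w (i + 1 + 1 + 1) →
      φ (w (i + 1 + 1)) = w (i + 1 + 1 + 1 + 1) := by
    intro i h1 h3
    have e : ∀ i, ({v, w (i + 1), w i} : Finset α) = {v, w i, w (i + 1)} := by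
      intro i; rw [Finset.pair_comm]
    exact X.third_vertex hφ (p := v) (q := w (i + 1)) (r := w i) (hwv _).symm (hwv _)
      (hww _).symm (by rw [e]; exact hf _) (hf _) (by rw [e]; exact (hne _).symm)
      (by rw [e]; exact hf _) (hf _) (by rw [e]; exact (hne _).symm) hv h3 h1
  have all : ∀ k : Fin (m + 3), φ (w k) = w (k + 1 + 1) ∧
      φ (w (k + 1)) = w (k + 1 + 1 + 1) := by
    intro k
    induction k using Fin.induction with
    | zero => exact ⟨ha, hb⟩
    | succ k ih =>
      rw [← Fin.coeSucc_eq_succ]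
      exact ⟨ih.2, step _ ih.1 ih.2⟩
  refine ⟨φ, hφ, hv, fun i => ?_⟩
  have hi := all (i - 1)
  have hj : i = (i - 1) + 1 := by simp
  generalize i - 1 = j at hi hj
  subst hj
  rw [hu, hu (j + 1 + 1)]
  simp [Finset.image_insert, hv, hi.1, hi.2]
end
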